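/- (Reciprocity Theorem for words.) Let A be a finite alphabet, let u be a word over A with |u| = k, let R ⊆ {0,1,…,k}, let p = (u,R), and let p* = (u, {0,1,…,k} \ R). Then for every word w over A, binom(w; p) = ∑_{v ∈ A*} (−1)^{|v|−|u|} · binom(v; p*) · binom(w, v), where the sum is over all words v (only words v that are subwords of w with u ≤ v contribute nonzero terms, so the sum is finite). -/

import Mathlib

/-- The extension of an occurrence `φ : [k] → [n]` (here 0-indexed, as a map
`Fin k → Fin n`) to `{0,1,…,k+1}`, in 1-based position values: `φ(0) = 0`,
`φ(i) = (φ i) + 1` (converting 0-based to 1-based) for `1 ≤ i ≤ k`, and `φ(k+1) = n+1`. -/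
def extOcc {k n : ℕ} (φ : Fin k → Fin n) : ℕ → ℕ
  | 0 => 0
  | i + 1 => if h : i < k then (φ ⟨i, h⟩ : ℕ) + 1 else n + 1

/-- `vOccCount v u R` is the number of occurrences of the restricted word (pair) `(u,R)` in
`v`: strictly increasing letter-matching maps `φ` from the positions of `u` to those of `v`
such that `φ(i+1) = φ(i) + 1` for all `i ∈ R`, with the conventions `φ(0) = 0` and
`φ(|u|+1) = |v|+1`. -/
def vOccCount {A : Type*} [DecidableEq A] (v u : List A) (R : Finset ℕ) : ℕ :=
  ((Finset.univ : Finset (Fin u.length → Fin v.length)).filter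
    (fun φ => (∀ i j : Fin u.length, i < j → φ i < φ j) ∧
      (∀ i : Fin u.length, u.get i = v.get (φ i)) ∧
      ∀ i ∈ R, extOcc φ (i + 1) = extOcc φ i + 1)).card
/-- `subwordCount w v = binom(w,v)` is the number of occurrences of `v` as a (scattered,
unrestricted) subword of `w`. -/
def subwordCount {A : Type*} [DecidableEq A] (w v : List A) : ℕ := vOccCount w v ∅

open Classical in
/-- Predicate version of the count of occurrences. -/
noncomputable def pOcc {A : Type*} (v u : List A) (P : ℕ → Prop) : ℕ :=
  ((Finset.univ : Finset (Fin u.length → Fin v.length)).filter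
    (fun φ => (∀ i j : Fin u.length, i < j → φ i < φ j) ∧
      (∀ i : Fin u.length, u.get i = v.get (φ i)) ∧
      ∀ i, i ≤ u.length → P i → extOcc φ (i + 1) = extOcc φ i + 1)).card

theorem vOccCount_eq_pOcc {A : Type*} [DecidableEq A] (v u : List A) (R : Finset ℕ)
    (hR : R ⊆ Finset.range (u.length + 1)) : vOccCount v u R = pOcc v u (· ∈ R) := by
  unfold vOccCount pOcc
  congr 1
  ext φ
  simp only [Finset.mem_filter, Finset.mem_univ, true_and]
  have : ∀ i ∈ R, i ≤ u.length := fun i hi => by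
    have := hR hi
    simp at this
    omega
  grind

theorem pOcc_congr {A : Type*} (v u : List A) (P Q : ℕ → Prop)
    (h : ∀ i ≤ u.length, (P i ↔ Q i)) : pOcc v u P = pOcc v u Q := by
  unfold pOcc
  congr 1
  ext φ
  simp only [Finset.mem_filter, Finset.mem_univ, true_and]
  grind

theorem pOcc_nil_nil {A : Type*} (P : ℕ → Prop) : pOcc ([] : List A) [] P = 1 := by
  classical
  unfold pOcc
  rw [Finset.filter_true_of_mem]
  · simp
  · intro φ _
    refine ⟨fun i => i.elim0, fun i => i.elim0, ?_⟩
    intro i hi _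
    have : i = 0 := by simpa using hi
    subst this
    simp [extOcc]

theorem pOcc_nil_cons {A : Type*} (a : A) (u : List A) (P : ℕ → Prop) :
    pOcc [] (a :: u) P = 0 := by
  unfold pOcc
  rw [Finset.card_eq_zero, Finset.eq_empty_iff_forall_notMem]
  intro φ
  exact (φ ⟨0, by simp⟩).elim0

open Classical in
theorem pOcc_cons_nil {A : Type*} (b : A) (v : List A) (P : ℕ → Prop) :
    pOcc (b :: v) [] P = if P 0 then 0 else 1 := by
  unfold pOcc
  split_ifs with h
  · rw [Finset.card_eq_zero, Finset.eq_empty_iff_forall_notMem]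
    intro φ hφ
    have := (Finset.mem_filter.1 hφ).2.2.2 0 (by simp) h
    simp [extOcc] at this
  · rw [Finset.filter_true_of_mem]
    · simp
    · intro φ _
      refine ⟨fun i => i.elim0, fun i => i.elim0, ?_⟩
      intro i hi hP
      have : i = 0 := by simpa using hi
      subst this
      exact absurd hP h

theorem extOcc_cons {k n : ℕ} (ψ : Fin k → Fin n) (i : ℕ) :
    extOcc (Fin.cons 0 (Fin.succ ∘ ψ) : Fin (k+1) → Fin (n+1)) (i + 1) = extOcc ψ i + 1 := by
  cases i with
  | zero => simp [extOcc]
  | succ j =>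
    by_cases h : j < k
    · have h' : j + 1 < k + 1 := by omega
      simp only [extOcc, dif_pos h, dif_pos h']
      rfl
    · simp [extOcc, h]

theorem extOcc_succ {k n : ℕ} (ψ : Fin k → Fin n) (i : ℕ) :
    extOcc (Fin.succ ∘ ψ : Fin k → Fin (n+1)) (i + 1) = extOcc ψ (i + 1) + 1 := by
  by_cases h : i < k <;> simp [extOcc, h]

open Classical in
theorem pOcc_cons_cons {A : Type*} (a b : A) (u v : List A) (P : ℕ → Prop) :
    pOcc (b :: v) (a :: u) P =
      (if a = b then pOcc v u (fun i => P (i + 1)) else 0) +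
        (if P 0 then 0 else pOcc v (a :: u) P) := by
  conv_lhs => unfold pOcc
  rw [← Finset.card_filter_add_card_filter_not
    (p := fun φ : Fin (a :: u).length → Fin (b :: v).length => φ (0 : Fin (u.length + 1)) = (0 : Fin (v.length+1)))]
  congr 1
  · split_ifs with hab
    · unfold pOcc
      symm
      refine Finset.card_bij (fun ψ _ => (Fin.cons 0 (Fin.succ ∘ ψ) : Fin (u.length+1) → Fin (v.length+1))) ?_ ?_ ?_
      · intro ψ hψ
        obtain ⟨h1, h2, h3⟩ := (Finset.mem_filter.1 hψ).2
        simp only [Finset.mem_filter, Finset.mem_univ, true_and]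
        refine ⟨⟨?_, ?_, ?_⟩, rfl⟩
        · intro i j
          refine Fin.cases ?_ (fun i => ?_) i <;> refine Fin.cases ?_ (fun j => ?_) j
          · intro h; exact absurd h (lt_irrefl _)
          · intro _; exact Fin.succ_pos _
          · intro h; exact absurd h (Fin.not_lt_zero _)
          · intro h; exact Fin.succ_lt_succ_iff.2 (h1 i j (Fin.succ_lt_succ_iff.1 h))
        · intro i
          refine Fin.cases ?_ (fun i => ?_) i
          · exact hab
          · exact h2 i
        · intro i hi hP
          have e := extOcc_cons ψ
          refine (e i).trans ?_
          cases i with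
          | zero => rfl
          | succ j =>
            refine Eq.trans ?_ (congrArg (· + 1) (e j).symm)
            have := h3 j (by simpa using hi) hP
            simp [this]
      · intro ψ _ ψ' _ h
        have := (Fin.cons_inj.1 h).2
        funext i
        exact Fin.succ_injective _ (congrFun this i)
      · intro φ hφ
        simp only [Finset.mem_filter, Finset.mem_univ, true_and] at hφ
        obtain ⟨⟨h1, h2, h3⟩, h0⟩ := hφ
        have hne : ∀ i : Fin u.length, φ (Fin.succ i : Fin (u.length+1)) ≠ (0 : Fin (v.length+1)) := by
          intro i
          have := h1 (0 : Fin (u.length+1)) (Fin.succ i : Fin (u.length+1)) (Fin.succ_pos _)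
          exact (lt_of_le_of_lt (Fin.zero_le _) this).ne'
        let ψ : Fin u.length → Fin v.length := fun i => Fin.pred (n := v.length) (φ (Fin.succ i : Fin (u.length+1))) (hne i)
        have hφ : φ = (Fin.cons 0 (Fin.succ ∘ ψ) : Fin (u.length+1) → Fin (v.length+1)) := by
          funext i
          refine Fin.cases (n := u.length) ?_ (fun i => ?_) i
          · exact h0
          · exact (Fin.succ_pred (n := v.length) _ (hne i)).symm
        refine ⟨ψ, ?_, hφ.symm⟩
        simp only [Finset.mem_filter, Finset.mem_univ, true_and]
        clear_value ψ
        subst hφ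
        refine ⟨?_, ?_, ?_⟩
        · intro i j h
          exact Fin.succ_lt_succ_iff.1 (h1 (Fin.succ i : Fin (u.length+1)) (Fin.succ j : Fin (u.length+1)) (Fin.succ_lt_succ_iff.2 h))
        · intro i
          exact h2 (Fin.succ i : Fin (u.length+1))
        · intro i hi hP
          have e := extOcc_cons ψ
          have := (e (i+1)).symm.trans ((h3 (i+1) (by simpa using hi) hP).trans (congrArg (· + 1) (e i)))
          simpa using this
    · rw [Finset.card_eq_zero, Finset.eq_empty_iff_forall_notMem]
      intro φ hφ
      simp only [Finset.mem_filter, Finset.mem_univ, true_and] at hφ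
      obtain ⟨⟨h1, h2, h3⟩, h0⟩ := hφ
      have := h2 (0 : Fin (u.length+1))
      rw [h0] at this
      exact hab this
  · split_ifs with hP0
    · rw [Finset.card_eq_zero, Finset.eq_empty_iff_forall_notMem]
      intro φ hφ
      simp only [Finset.mem_filter, Finset.mem_univ, true_and] at hφ
      obtain ⟨⟨h1, h2, h3⟩, h0⟩ := hφ
      have := h3 0 (by simp) hP0
      apply h0
      simp [extOcc] at this
      exact Fin.ext (congrArg Fin.val this)
    · unfold pOcc
      symm
      refine Finset.card_bij (fun ψ _ => (Fin.succ ∘ ψ : Fin (u.length+1) → Fin (v.length+1))) ?_ ?_ ?_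
      · intro ψ hψ
        obtain ⟨h1, h2, h3⟩ := (Finset.mem_filter.1 hψ).2
        simp only [Finset.mem_filter, Finset.mem_univ, true_and]
        refine ⟨⟨?_, ?_, ?_⟩, Fin.succ_ne_zero _⟩
        · intro i j h
          exact Fin.succ_lt_succ_iff.2 (h1 i j h)
        · intro i
          exact h2 i
        · intro i hi hP
          have e := extOcc_succ ψ
          cases i with
          | zero => exact absurd hP hP0
          | succ j =>
            refine (e (j+1)).trans (Eq.trans ?_ (congrArg (· + 1) (e j).symm))
            have := h3 (j+1) hi hP
            simp [this]
      · intro ψ _ ψ' _ h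
        funext i
        exact Fin.succ_injective _ (congrFun h i)
      · intro φ hφ
        simp only [Finset.mem_filter, Finset.mem_univ, true_and] at hφ
        obtain ⟨⟨h1, h2, h3⟩, h0⟩ := hφ
        have hne : ∀ i : Fin (u.length+1), φ i ≠ (0 : Fin (v.length+1)) := by
          intro i
          refine Fin.cases h0 (fun i => ?_) i
          have := h1 (0 : Fin (u.length+1)) (Fin.succ i : Fin (u.length+1)) (Fin.succ_pos _)
          exact (lt_of_le_of_lt (Fin.zero_le _) this).ne'
        let ψ : Fin (u.length+1) → Fin v.length := fun i => Fin.pred (n := v.length) (φ i) (hne i)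
        have hφ : φ = (Fin.succ ∘ ψ : Fin (u.length+1) → Fin (v.length+1)) := by
          funext i
          exact (Fin.succ_pred (n := v.length) _ (hne i)).symm
        refine ⟨ψ, ?_, hφ.symm⟩
        simp only [Finset.mem_filter, Finset.mem_univ, true_and]
        clear_value ψ
        subst hφ
        refine ⟨?_, ?_, ?_⟩
        · intro i j h
          exact Fin.succ_lt_succ_iff.1 (h1 i j h)
        · intro i
          exact h2 i
        · intro i hi hP
          have e := extOcc_succ ψ
          cases i with
          | zero => exact absurd hP hP0
          | succ j =>
            have := (e (j+1)).symm.trans ((h3 (j+1) hi hP).trans (congrArg (· + 1) (e j)))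
            simpa using this

theorem subwordCount_eq_count {A : Type*} [DecidableEq A] (w v : List A) :
    subwordCount w v = w.sublists'.count v := by
  unfold subwordCount
  rw [vOccCount_eq_pOcc _ _ _ (by simp)]
  rw [pOcc_congr _ _ _ (fun _ => False) (by simp)]
  induction w generalizing v with
  | nil =>
    cases v with
    | nil => simp [pOcc_nil_nil]
    | cons a v => simp [pOcc_nil_cons]
  | cons b w ih =>
    have hc : ∀ v, (List.map (List.cons b) w.sublists').count (b :: v) = w.sublists'.count v :=
      fun v => List.count_map_of_injective _ _ (List.cons_injective) _
    cases v with
    | nil =>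
      rw [pOcc_cons_nil, List.sublists'_cons, List.count_append, ← ih]
      rw [List.count_eq_zero_of_not_mem (by simp)]
      cases w with
      | nil => simp [pOcc_nil_nil]
      | cons c w => simp [pOcc_cons_nil]
    | cons a v =>
      rw [pOcc_cons_cons, List.sublists'_cons, List.count_append, ← ih]
      by_cases h : a = b
      · subst h
        rw [hc, ← ih]
        simp [add_comm]
      · rw [List.count_eq_zero_of_not_mem (a := a :: v) (l := List.map _ _)]
        · simp [h]
        · simp [Ne.symm h]

theorem pOcc_recip {A : Type*} (w u : List A) (P : ℕ → Prop) :
    (pOcc w u P : ℚ) = (w.sublists'.map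
      (fun v => (-1 : ℚ) ^ (v.length + u.length) * pOcc v u (fun i => ¬ P i))).sum := by
  classical
  induction w generalizing u P with
  | nil =>
    cases u with
    | nil => simp [pOcc_nil_nil]
    | cons a u => simp [pOcc_nil_cons]
  | cons b w ih =>
    rw [List.sublists'_cons, List.map_append, List.sum_append, ← ih, List.map_map]
    cases u with
    | nil =>
      have h1 : ((fun v => (-1 : ℚ) ^ (v.length + ([] : List A).length) * pOcc v [] (fun i => ¬ P i)) ∘ List.cons b)
          = fun v => -(if P 0 then (1:ℚ) else 0) * ((-1 : ℚ) ^ (v.length + ([] : List A).length) * pOcc v [] (fun _ => ¬ True)) := by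
        funext v
        have : pOcc v [] (fun _ => ¬ True) = 1 := by
          cases v with
          | nil => simp [pOcc_nil_nil]
          | cons c v => simp [pOcc_cons_nil]
        simp only [Function.comp, this, pOcc_cons_nil]
        by_cases h : P 0 <;> simp [h, pow_succ]
      rw [h1, List.sum_map_mul_left, ← ih]
      cases w with
      | nil => by_cases h : P 0 <;> simp [h, pOcc_nil_nil, pOcc_cons_nil]
      | cons c w => by_cases h : P 0 <;> simp [h, pOcc_cons_nil]
    | cons a u =>
      have h1 : ((fun v => (-1 : ℚ) ^ (v.length + (a :: u).length) * pOcc v (a :: u) (fun i => ¬ P i)) ∘ List.cons b)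
          = fun v => (if a = b then (1:ℚ) else 0) * ((-1 : ℚ) ^ (v.length + u.length) * pOcc v u (fun i => ¬ P (i + 1)))
            + -(if P 0 then (1:ℚ) else 0) * ((-1 : ℚ) ^ (v.length + (a :: u).length) * pOcc v (a :: u) (fun i => ¬ P i)) := by
        funext v
        simp only [Function.comp, pOcc_cons_cons, List.length_cons]
        by_cases h : P 0 <;> by_cases h' : a = b <;> simp only [h, h', if_true, if_false, not_true, not_false_iff] <;> push_cast <;> ring
      rw [h1, List.sum_map_add, List.sum_map_mul_left, List.sum_map_mul_left, ← ih (a :: u) P, ← ih u (fun i => P (i+1)),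
        pOcc_cons_cons]
      by_cases h : P 0 <;> by_cases h' : a = b <;> simp [h, h'] <;> ring

theorem pOcc_eq_zero {A : Type*} (v u : List A) (P : ℕ → Prop) (h : v.length < u.length) :
    pOcc v u P = 0 := by
  classical
  unfold pOcc
  rw [Finset.card_eq_zero, Finset.eq_empty_iff_forall_notMem]
  intro φ hφ
  obtain ⟨h1, -, -⟩ := (Finset.mem_filter.1 hφ).2
  have hs : StrictMono φ := fun i j hij => h1 i j hij
  have := Fintype.card_le_of_injective φ hs.injective
  simp at this
  omega

/-- Reciprocity theorem for words: for `p = (u,R)` with `R ⊆ {0,…,|u|}` and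
`p* = (u, {0,…,|u|} \ R)`, and every word `w`,
`binom(w; p) = ∑_v (−1)^{|v|−|u|} · binom(v; p*) · binom(w,v)`,
the sum being over all words `v`; only subwords `v` of `w` contribute nonzero terms, so it
suffices to sum over the (distinct) sublists of `w`. -/
theorem vOccCount_reciprocity {A : Type*} [Fintype A] [DecidableEq A] (u w : List A)
    (R : Finset ℕ) (hR : R ⊆ Finset.range (u.length + 1)) :
    (vOccCount w u R : ℚ) =
      ∑ v ∈ w.sublists.toFinset,
        (-1 : ℚ) ^ (v.length - u.length) *
          vOccCount v u (Finset.range (u.length + 1) \ R) * subwordCount w v := by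
  rw [vOccCount_eq_pOcc _ _ _ hR, pOcc_recip, Finset.sum_list_map_count]
  have hs : w.sublists'.toFinset = w.sublists.toFinset := by
    ext v
    simp
  rw [hs]
  refine Finset.sum_congr rfl fun v _ => ?_
  rw [subwordCount_eq_count, vOccCount_eq_pOcc _ _ _ Finset.sdiff_subset, nsmul_eq_mul]
  rw [pOcc_congr v u (· ∈ Finset.range (u.length + 1) \ R) (fun i => ¬ i ∈ R)
    (fun i hi => by simp; omega)]
  rw [mul_comm]
  by_cases h : v.length < u.length
  · rw [pOcc_eq_zero _ _ _ h]
    simp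
  · have : v.length + u.length = (v.length - u.length) + 2 * u.length := by omega
    rw [this, pow_add, pow_mul]
    simp
    left
    congr!
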